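/- arXiv:2109.10486 — 3 statements merged into one kernel-verified Lean document; each statement's English description precedes it below -/
import Mathlib

section
/- Let Ω be a finite nonempty set, H : Ω → ℝ, and Z(β) = ∑_{x∈Ω} exp(−βH(x)). Fix a real β_k and define the overlap function f(β) = Z((β_k + β)/2)² / (Z(β_k)·Z(β)). Then f is non-increasing on the interval [β_k, ∞). (This makes the predicate 'f(β) ≥ c⁻¹' used in the binary-search cooling-schedule construction monotone.) -/
open scoped BigOperators

/-!
The logarithm `φ` of the partition function is convex, and `f β = exp (-2 G β)` where
`G β = (φ βk + φ β) / 2 - φ ((βk + β) / 2)` is the midpoint Jensen gap of `φ`. The Jensen gap of a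
convex function grows as one endpoint moves away from the other.
-/

open Real MeasureTheory ProbabilityTheory

theorem monotoneOn_jensen_gap_of_convexOn {𝕜 : Type*} [Field 𝕜] [LinearOrder 𝕜]
    [IsStrictOrderedRing 𝕜] {s : Set 𝕜} {φ : 𝕜 → 𝕜} (hφ : ConvexOn 𝕜 s φ) {a : 𝕜} (ha : a ∈ s)
    {p q : 𝕜} (hp : 0 ≤ p) (hq : 0 ≤ q) (hpq : p + q = 1) :
    MonotoneOn (fun x => p * φ a + q * φ x - φ (p * a + q * x)) (s ∩ Set.Ici a) := by
  rintro x ⟨hxs, hax : a ≤ x⟩ y ⟨hys, -⟩ hxy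
  obtain rfl : p = 1 - q := by linarith
  set z := (1 - q) * a + q * x with hz
  have hzs : z ∈ s := hφ.1 ha hxs hp hq hpq
  have hzx : z ≤ x := by linarith [mul_le_mul_of_nonneg_left hax hp]
  -- Both `x` and the mean of `a` and `y` lie in `[z, y]`, so the chord of `φ` over `[z, y]` bounds
  -- `φ` at these two points.
  obtain ⟨u, v, hu, hv, huv, hx⟩ : x ∈ segment 𝕜 z y := by
    rw [segment_eq_Icc (hzx.trans hxy)]
    exact ⟨hzx, hxy⟩
  rw [smul_eq_mul, smul_eq_mul] at hx
  have hqu : q * u ≤ 1 := mul_le_one₀ (by linarith) hu (by linarith)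
  have hzy : (1 - q * u) * z + q * u * y = (1 - q) * a + q * y := by
    linear_combination -q * hx + q * y * huv + hz
  have hφx : φ x ≤ u * φ z + v * φ y := by
    simpa only [hx, smul_eq_mul] using hφ.2 hzs hys hu hv huv
  have hφzy : φ ((1 - q) * a + q * y) ≤ (1 - q * u) * φ z + q * u * φ y := by
    simpa only [hzy, smul_eq_mul] using
      hφ.2 hzs hys (sub_nonneg.2 hqu) (mul_nonneg hq hu) (sub_add_cancel 1 (q * u))
  obtain rfl : v = 1 - u := by linarith
  dsimp only
  linarith [mul_le_mul_of_nonneg_left hφx hq]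

theorem antitoneOn_sq_midpoint_div_mul_of_convexOn_log {s : Set ℝ} {Z : ℝ → ℝ}
    (hZ_pos : ∀ β ∈ s, 0 < Z β) (hZ : ConvexOn ℝ s fun β => log (Z β)) {a : ℝ} (ha : a ∈ s) :
    AntitoneOn (fun β => Z ((a + β) / 2) ^ 2 / (Z a * Z β)) (s ∩ Set.Ici a) := by
  set gap : ℝ → ℝ := fun β =>
    1 / 2 * log (Z a) + 1 / 2 * log (Z β) - log (Z (1 / 2 * a + 1 / 2 * β))
  have h_gap : MonotoneOn gap (s ∩ Set.Ici a) :=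
    monotoneOn_jensen_gap_of_convexOn hZ ha (by norm_num) (by norm_num) (by norm_num)
  have h_exp : ∀ β ∈ s, exp (-2 * gap β) = Z ((a + β) / 2) ^ 2 / (Z a * Z β) := by
    intro β hβ
    have h_mid : 1 / 2 * a + 1 / 2 * β = (a + β) / 2 := by ring
    have h_mid_mem : (a + β) / 2 ∈ s :=
      h_mid ▸ hZ.1 ha hβ (by norm_num) (by norm_num) (by norm_num)
    have h_arg : -2 * gap β = 2 * log (Z ((a + β) / 2)) - (log (Z a) + log (Z β)) := by
      simp only [gap, h_mid]
      ring
    rw [h_arg, exp_sub, exp_add, exp_log (hZ_pos a ha), exp_log (hZ_pos β hβ), two_mul, exp_add,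
      exp_log (hZ_pos _ h_mid_mem), sq]
  intro x hx y hy hxy
  dsimp only
  rw [← h_exp x hx.1, ← h_exp y hy.1, exp_le_exp]
  linarith [h_gap hx hy hxy]

theorem convexOn_cgf {Ω : Type*} [MeasurableSpace Ω] (X : Ω → ℝ) (μ : Measure Ω) :
    ConvexOn ℝ (integrableExpSet X μ) (cgf X μ) := by
  refine ⟨convex_integrableExpSet, fun a ha b hb p q hp hq hpq => ?_⟩
  obtain rfl | hμ := eq_zero_or_neZero μ
  · simp only [cgf_zero_measure, Pi.zero_apply, smul_zero, add_zero, le_refl]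
  have h_int {t c : ℝ} (ht : t ∈ integrableExpSet X μ) :
      Integrable (fun x => exp (t * X x - c)) μ := by
    simpa only [exp_sub] using Integrable.div_const ht (exp c)
  have h_integral {t c : ℝ} (ht : t ∈ integrableExpSet X μ) :
      ∫ x, exp (t * X x - c) ∂μ = exp (cgf X μ t - c) := by
    simp only [exp_sub, integral_div, exp_cgf ht, mgf]
  simp only [smul_eq_mul]
  set A := cgf X μ a
  set B := cgf X μ b
  have h_mem : p * a + q * b ∈ integrableExpSet X μ := convex_integrableExpSet ha hb hp hq hpq
  -- After normalizing both endpoints to total mass one, convexity of `exp` applies pointwise.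
  have h_le_one : exp (cgf X μ (p * a + q * b) - (p * A + q * B)) ≤ 1 :=
    calc exp (cgf X μ (p * a + q * b) - (p * A + q * B))
        = ∫ x, exp ((p * a + q * b) * X x - (p * A + q * B)) ∂μ := (h_integral h_mem).symm
      _ ≤ ∫ x, (p * exp (a * X x - A) + q * exp (b * X x - B)) ∂μ := by
          refine integral_mono (h_int h_mem)
            (((h_int ha).const_mul p).add ((h_int hb).const_mul q)) fun x => ?_
          have h := convexOn_exp.2 (Set.mem_univ (a * X x - A)) (Set.mem_univ (b * X x - B))
            hp hq hpq
          simp only [smul_eq_mul] at h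
          convert h using 2
          ring
      _ = p * exp (A - A) + q * exp (B - B) := by
          rw [integral_add ((h_int ha).const_mul p) ((h_int hb).const_mul q),
            integral_const_mul, integral_const_mul, h_integral ha, h_integral hb]
      _ = 1 := by simp only [sub_self, exp_zero, mul_one, hpq]
  linarith [exp_le_one_iff.1 h_le_one]

theorem overlap_function_antitoneOn_general
    {Ω : Type*} [MeasurableSpace Ω] (μ : Measure Ω) [NeZero μ] (H : Ω → ℝ)
    (Z : ℝ → ℝ) (hZ : ∀ β, Z β = ∫ x, exp (-β * H x) ∂μ)
    (βk : ℝ) (hβk : βk ∈ integrableExpSet (-H) μ) (f : ℝ → ℝ)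
    (hf : ∀ β, f β = Z ((βk + β) / 2) ^ 2 / (Z βk * Z β)) :
    AntitoneOn f (integrableExpSet (-H) μ ∩ Set.Ici βk) := by
  obtain rfl : Z = mgf (-H) μ := by
    ext β
    simp only [hZ, mgf, Pi.neg_apply, neg_mul, mul_neg]
  obtain rfl := funext hf
  exact antitoneOn_sq_midpoint_div_mul_of_convexOn_log (fun _ => mgf_pos_iff.2)
    (convexOn_cgf (-H) μ) hβk

/-- The overlap function `f(β) = Z((β_k+β)/2)²/(Z(β_k)Z(β))` is non-increasing on
`[β_k, ∞)`, which makes the binary-search predicate monotone. -/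
theorem overlap_function_antitoneOn
    {Ω : Type*} [Fintype Ω] [Nonempty Ω] (H : Ω → ℝ)
    (Z : ℝ → ℝ) (hZ : ∀ β, Z β = ∑ x, Real.exp (-β * H x))
    (βk : ℝ) (f : ℝ → ℝ)
    (hf : ∀ β, f β = (Z ((βk + β) / 2)) ^ 2 / (Z βk * Z β)) :
    AntitoneOn f (Set.Ici βk) := by
  let _ : MeasurableSpace Ω := ⊤
  exact (overlap_function_antitoneOn_general .count H Z (fun β => by rw [hZ, integral_count])
    βk .of_finite f hf).mono fun _ hβ => ⟨.of_finite, hβ⟩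
end

section
/- Let V be a nonzero finite-dimensional complex inner product space, A : V → V a self-adjoint linear operator with operator norm ‖A‖ ≤ λ_max, and let φ, ψ ∈ V be unit vectors. Let δβ > 0 and suppose E_β := 1 − 2δβ·⟨φ, Aφ⟩ satisfies E_β > 0. Define C = (1/√E_β − 1)·Re⟨φ, ψ⟩ − (δβ/√E_β)·Re⟨ψ, Aφ⟩. Then |C| ≤ 3·δβ·λ_max/√E_β. -/
open scoped InnerProductSpace

/-!
For unit vectors, `|⟪φ, Aφ⟫| ≤ ‖A‖` puts `E_β` within `2 δβ ‖A‖` of `1`. Since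
`|1 / √x - 1| ≤ |x - 1| / √x`, the overlap term of `C` contributes `2` to the constant `3`;
the matrix element `⟪ψ, Aφ⟫` contributes the remaining `1`.
-/

theorem abs_sqrt_sub_one_le {x : ℝ} (hx : 0 ≤ x) : |√x - 1| ≤ |x - 1| :=
  calc |√x - 1| ≤ |√x - 1| * (√x + 1) :=
        le_mul_of_one_le_right (abs_nonneg _) (le_add_of_nonneg_left (Real.sqrt_nonneg x))
    _ = |(√x - 1) * (√x + 1)| := by
        rw [abs_mul, abs_of_nonneg (by positivity : 0 ≤ √x + 1)]
    _ = |x - 1| := by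
        congr 1
        linear_combination Real.sq_sqrt hx

theorem abs_one_div_sqrt_sub_one_le {x : ℝ} (hx : 0 < x) :
    |1 / √x - 1| ≤ |x - 1| / √x := by
  have hsqrt : 0 < √x := Real.sqrt_pos.mpr hx
  rw [div_sub_one hsqrt.ne', abs_div, abs_of_pos hsqrt, abs_sub_comm]
  exact div_le_div_of_nonneg_right (abs_sqrt_sub_one_le hx.le) hsqrt.le

section InnerProductSpace

variable {𝕜 V : Type*} [RCLike 𝕜] [SeminormedAddCommGroup V] [InnerProductSpace 𝕜 V]

theorem abs_re_inner_le_norm (x y : V) : |RCLike.re ⟪x, y⟫_𝕜| ≤ ‖x‖ * ‖y‖ :=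
  (RCLike.abs_re_le_norm _).trans (norm_inner_le_norm x y)

theorem abs_re_inner_apply_le_opNorm {W : Type*} [SeminormedAddCommGroup W] [NormedSpace 𝕜 W]
    (A : W →L[𝕜] V) (x : V) (y : W) :
    |RCLike.re ⟪x, A y⟫_𝕜| ≤ ‖x‖ * (‖A‖ * ‖y‖) :=
  (abs_re_inner_le_norm x (A y)).trans <| by gcongr; exact A.le_opNorm y

theorem pvgs_C_component_bound_general (A : V →L[𝕜] V) (φ ψ : V) (δβ Eβ : ℝ)
    (hEβ : Eβ = 1 - 2 * δβ * RCLike.re ⟪φ, A φ⟫_𝕜) (hEpos : 0 < Eβ) :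
    |(1 / √Eβ - 1) * RCLike.re ⟪φ, ψ⟫_𝕜 - (δβ / √Eβ) * RCLike.re ⟪ψ, A φ⟫_𝕜| ≤
      (2 * ‖φ‖ ^ 2 + 1) * |δβ| * (‖A‖ * ‖φ‖ * ‖ψ‖) / √Eβ := by
  have henergy : |Eβ - 1| ≤ 2 * |δβ| * (‖φ‖ * (‖A‖ * ‖φ‖)) := by
    rw [hEβ, sub_sub_cancel_left, abs_neg, abs_mul, abs_mul, abs_two]
    gcongr
    exact abs_re_inner_apply_le_opNorm A φ φ
  have hnormalization : |1 / √Eβ - 1| ≤ 2 * |δβ| * (‖φ‖ * (‖A‖ * ‖φ‖)) / √Eβ :=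
    (abs_one_div_sqrt_sub_one_le hEpos).trans (by gcongr)
  calc |(1 / √Eβ - 1) * RCLike.re ⟪φ, ψ⟫_𝕜 - (δβ / √Eβ) * RCLike.re ⟪ψ, A φ⟫_𝕜|
      ≤ |1 / √Eβ - 1| * |RCLike.re ⟪φ, ψ⟫_𝕜| + |δβ| / √Eβ * |RCLike.re ⟪ψ, A φ⟫_𝕜| := by
        simpa only [abs_mul, abs_div, abs_of_nonneg (Real.sqrt_nonneg Eβ)] using
          abs_sub ((1 / √Eβ - 1) * RCLike.re ⟪φ, ψ⟫_𝕜) ((δβ / √Eβ) * RCLike.re ⟪ψ, A φ⟫_𝕜)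
    _ ≤ 2 * |δβ| * (‖φ‖ * (‖A‖ * ‖φ‖)) / √Eβ * (‖φ‖ * ‖ψ‖) +
          |δβ| / √Eβ * (‖ψ‖ * (‖A‖ * ‖φ‖)) := by
        gcongr
        · exact abs_re_inner_le_norm φ ψ
        · exact abs_re_inner_apply_le_opNorm A ψ φ
    _ = (2 * ‖φ‖ ^ 2 + 1) * |δβ| * (‖A‖ * ‖φ‖ * ‖ψ‖) / √Eβ := by ring

end InnerProductSpace

/-- Bound on the component `C_m` of the right-hand side vector in the projected
variational Gibbs sampling linear system. -/
theorem pvgs_C_component_bound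
    {V : Type*} [NormedAddCommGroup V] [InnerProductSpace ℂ V]
    [FiniteDimensional ℂ V] [Nontrivial V]
    (A : V →L[ℂ] V) (hA : IsSelfAdjoint A)
    (lamMax : ℝ) (hAnorm : ‖A‖ ≤ lamMax)
    (φ ψ : V) (hφ : ‖φ‖ = 1) (hψ : ‖ψ‖ = 1)
    (δβ : ℝ) (hδβ : 0 < δβ)
    (Eβ : ℝ) (hEβ : Eβ = 1 - 2 * δβ * (⟪φ, A φ⟫_ℂ).re) (hEpos : 0 < Eβ)
    (C : ℝ)
    (hC : C = (1 / Real.sqrt Eβ - 1) * (⟪φ, ψ⟫_ℂ).re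
        - (δβ / Real.sqrt Eβ) * (⟪ψ, A φ⟫_ℂ).re) :
    |C| ≤ 3 * δβ * lamMax / Real.sqrt Eβ := by
  grw [← hAnorm]
  simpa [hC, hφ, hψ, abs_of_pos hδβ, two_add_one_eq_three] using
    pvgs_C_component_bound_general A φ ψ δβ Eβ hEβ hEpos
end

section
/- Let d ≥ 1, let ψ ∈ ℂ^d be a unit vector, let O = ψψ* − (1/d)·I, and let σ be any d×d positive semidefinite complex matrix with trace 1 (a density matrix). Then Tr(σ)·Tr(O²) + 2·Tr(σO²) ≤ 3. -/
open scoped BigOperators ComplexOrder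

/-!
For Hermitian `O`, the matrix `O²` is positive semidefinite, and `Tr(AB) ≤ Tr(A) Tr(B)` for
positive semidefinite `A` and `B`: writing `A = CᴴC` and `B = DᴴD`, this is submultiplicativity of
the Frobenius norm, `‖C Dᴴ‖² ≤ ‖C‖² ‖D‖²`. Hence `Tr(σ) Tr(O²) + 2 Tr(σO²) ≤ 3 Tr(σ) Tr(O²)`.
Passing to the traceless part of a Hermitian `d × d` matrix `A` only decreases the trace of the
square, to `Tr(A²) - Tr(A)²/d`, and `Tr(A²) = 1` for a rank-one projection `A`.
-/

open Matrix

section FrobeniusNorm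

open scoped Matrix.Norms.Frobenius MatrixOrder

variable {𝕜 m n : Type*} [RCLike 𝕜] [Fintype m] [Fintype n]

theorem trace_conjTranspose_mul_self_eq_frobenius_norm_sq (A : Matrix m n 𝕜) :
    (Aᴴ * A).trace = ((‖A‖ ^ 2 : ℝ) : 𝕜) := by
  have norm_sq_eq_sum : ‖A‖ ^ 2 = ∑ i, ∑ j, ‖A i j‖ ^ 2 := by
    simp only [frobenius_norm_def, ← Real.sqrt_eq_rpow, Real.rpow_two]
    exact Real.sq_sqrt (by positivity)
  rw [norm_sq_eq_sum, Finset.sum_comm]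
  simp [trace, mul_apply, RCLike.conj_mul]

theorem trace_mul_le_trace_mul_trace_of_posSemidef {A B : Matrix n n 𝕜}
    (hA : A.PosSemidef) (hB : B.PosSemidef) : (A * B).trace ≤ A.trace * B.trace := by
  classical
  obtain ⟨C, rfl⟩ := CStarAlgebra.nonneg_iff_eq_star_mul_self.mp hA.nonneg
  obtain ⟨D, rfl⟩ := CStarAlgebra.nonneg_iff_eq_star_mul_self.mp hB.nonneg
  simp only [star_eq_conjTranspose]
  have trace_eq : (Cᴴ * C * (Dᴴ * D)).trace = ((C * Dᴴ)ᴴ * (C * Dᴴ)).trace := by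
    rw [← Matrix.mul_assoc, trace_mul_comm, conjTranspose_mul, conjTranspose_conjTranspose]
    simp only [Matrix.mul_assoc]
  have norm_sq_le : ‖C * Dᴴ‖ ^ 2 ≤ ‖C‖ ^ 2 * ‖D‖ ^ 2 := by
    rw [← mul_pow, ← frobenius_norm_conjTranspose D]
    gcongr
    exact frobenius_norm_mul C Dᴴ
  simp only [trace_eq, trace_conjTranspose_mul_self_eq_frobenius_norm_sq]
  exact_mod_cast norm_sq_le

end FrobeniusNorm

section TracelessPart

theorem isSelfAdjoint_trace {R n : Type*} [AddCommMonoid R] [StarAddMonoid R] [Fintype n]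
    {A : Matrix n n R} (hA : A.IsHermitian) : IsSelfAdjoint A.trace := by
  rw [IsSelfAdjoint, ← trace_conjTranspose, hA.eq]

variable {K n : Type*} [Field K] [Fintype n] [DecidableEq n]

/-- The traceless part `A - (Tr A / d) I` of a `d × d` matrix `A`, the component of an observable
that a classical shadow has to estimate. Where `d = 0` in `K`, division by zero makes it `A`
itself. -/
def tracelessPart (A : Matrix n n K) : Matrix n n K :=
  A - (A.trace / Fintype.card n) • 1

theorem trace_tracelessPart_mul_tracelessPart [CharZero K] (A B : Matrix n n K) :
    (tracelessPart A * tracelessPart B).trace =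
      (A * B).trace - A.trace * B.trace / Fintype.card n := by
  cases isEmpty_or_nonempty n
  · simp
  · have card_ne_zero : (Fintype.card n : K) ≠ 0 := Nat.cast_ne_zero.mpr Fintype.card_ne_zero
    simp only [tracelessPart, sub_mul, mul_sub, Matrix.smul_mul, Matrix.mul_smul, Matrix.one_mul,
      Matrix.mul_one, trace_sub, trace_smul, trace_one, smul_eq_mul]
    field_simp
    ring

theorem isHermitian_tracelessPart [StarRing K] {A : Matrix n n K} (hA : A.IsHermitian) :
    (tracelessPart A).IsHermitian :=
  hA.sub (isHermitian_one.smul ((isSelfAdjoint_trace hA).div (.natCast _)))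

end TracelessPart

section Observable

variable {𝕜 n : Type*} [RCLike 𝕜] [Fintype n] [DecidableEq n]

theorem trace_tracelessPart_mul_self_le {A : Matrix n n 𝕜} (hA : A.IsHermitian) :
    (tracelessPart A * tracelessPart A).trace ≤ (A * A).trace := by
  have trace_mul_trace_nonneg : 0 ≤ A.trace * A.trace := (isSelfAdjoint_trace hA).mul_self_nonneg
  rw [trace_tracelessPart_mul_tracelessPart]
  exact sub_le_self _ (by positivity)

theorem classical_shadow_overlap_variance_bound_general {A σ : Matrix n n 𝕜}
    (hA : A.IsHermitian) (hσ : σ.PosSemidef) :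
    σ.trace * (tracelessPart A * tracelessPart A).trace +
      2 * (σ * (tracelessPart A * tracelessPart A)).trace ≤ 3 * (σ.trace * (A * A).trace) := by
  set O := tracelessPart A
  have O_isHermitian : O.IsHermitian := isHermitian_tracelessPart hA
  have O_sq_posSemidef : (O * O).PosSemidef := by
    simpa only [O_isHermitian.eq] using posSemidef_conjTranspose_mul_self O
  calc σ.trace * (O * O).trace + 2 * (σ * (O * O)).trace
      ≤ σ.trace * (O * O).trace + 2 * (σ.trace * (O * O).trace) := by
        gcongr
        exact trace_mul_le_trace_mul_trace_of_posSemidef hσ O_sq_posSemidef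
    _ = 3 * (σ.trace * (O * O).trace) := by ring
    _ ≤ 3 * (σ.trace * (A * A).trace) := by
        gcongr
        · exact hσ.trace_nonneg
        · exact trace_tracelessPart_mul_self_le hA

end Observable

/-- Dimension-independent bound on the single-shot classical-shadow variance for the
overlap observable `O = ψψ* − I/d`: for any density matrix `σ`,
`Tr(σ)·Tr(O²) + 2·Tr(σO²) ≤ 3`. -/
theorem classical_shadow_overlap_variance_bound
    (d : ℕ) (hd : 1 ≤ d)
    (ψ : Fin d → ℂ) (hψ : ∑ i, ‖ψ i‖ ^ 2 = 1)
    (O : Matrix (Fin d) (Fin d) ℂ)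
    (hO : O = Matrix.vecMulVec ψ (star ψ) - ((1 : ℂ) / d) • (1 : Matrix (Fin d) (Fin d) ℂ))
    (σ : Matrix (Fin d) (Fin d) ℂ) (hσ : σ.PosSemidef) (htr : σ.trace = 1) :
    (σ.trace * (O * O).trace + 2 * (σ * (O * O)).trace).re ≤ 3 := by
  have star_dotProduct_self : star ψ ⬝ᵥ ψ = 1 := by
    simp only [dotProduct, Pi.star_apply, RCLike.star_def, Complex.conj_mul']
    exact_mod_cast hψ
  set P := vecMulVec ψ (star ψ)
  have P_isHermitian : P.IsHermitian := (posSemidef_vecMulVec_self_star ψ).isHermitian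
  have P_mul_self : P * P = P := by
    rw [vecMulVec_mul_vecMulVec, star_dotProduct_self, one_smul]
  have P_trace : P.trace = 1 := by
    rw [trace_vecMulVec, dotProduct_comm, star_dotProduct_self]
  have O_eq : O = tracelessPart P := by rw [hO, tracelessPart, P_trace, Fintype.card_fin]
  have bound := classical_shadow_overlap_variance_bound_general P_isHermitian hσ
  rw [← O_eq, P_mul_self, P_trace, htr, mul_one, mul_one] at bound
  simpa [htr] using (Complex.le_def.mp bound).1
end
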